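/- arXiv:1706.04321 — 3 statements merged into one kernel-verified Lean document; each statement's English description precedes it below -/
import Mathlib

section
/- Let φ : (0,1) → ℝ≥0 be integrable and satisfy the A₁ condition with constant c ≥ 1: for every subinterval I ⊆ (0,1), (1/|I|)·∫_I φ ≤ c·essinf_I φ. Then the decreasing rearrangement φ* of φ satisfies (1/t)·∫₀ᵗ φ*(y) dy ≤ c·φ*(t) for every t ∈ (0,1]. -/
/-!
Fix `t` and put `lam = g t`, `E = {φ > lam}`. Since `g` is antitone, `{g > lam} ⊆ (0, t]`, so
`|E| ≤ t`. By the layer-cake formula `(φ - lam)₊` and `(g - lam)₊` have the same integral, and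
`g ≤ (g - lam)₊ + lam`, so

`∫₀ᵗ g ≤ ∫_E (φ - lam) + lam t = ∫_E φ - lam |E| + lam t`.

Everything therefore reduces to `∫_E φ ≤ c lam |E|`, which gives
`∫₀ᵗ g ≤ (c - 1) lam |E| + lam t ≤ c lam t`.

If `|E| < 1`, this is a covering argument (`lintegral_le_of_intervals`). The `A₁` condition gives
`∫_I φ ≤ c lam |I|` for every interval `I` which is not almost contained in `E`. Cover `E` by an
open set `W` of nearly the same measure, enlarged so as to contain every open interval that is
almost contained in `E`. A connected component of `W` is then maximal: every strictly larger
interval in `(0, 1)` fails to be almost contained in `E`, so the `A₁` bound applies to it, and by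
letting it shrink the bound holds for the component itself. Summing over components and shrinking
`W` to `E` gives the claim.

If `|E| = 1`, then `t = 1`, and left-continuity of `g` at `1` shows that the essential infimum of
`φ` on `(0, 1)` is at most `g 1`, so the `A₁` condition on `(0, 1)` itself suffices.
-/

open MeasureTheory Set
open scoped ENNReal Topology

/-- A nonempty open preconnected subset of `(0, 1)` is an open interval. -/
lemma exists_eq_Ioo {C : Set ℝ} (ho : IsOpen C) (hc : IsPreconnected C) (hne : C.Nonempty)
    (hsub : C ⊆ Ioo 0 1) : ∃ a b, 0 ≤ a ∧ a < b ∧ b ≤ 1 ∧ C = Ioo a b := by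
  have hbb : BddBelow C := ⟨0, fun x hx => (hsub hx).1.le⟩
  have hba : BddAbove C := ⟨1, fun x hx => (hsub hx).2.le⟩
  have h1 : Ioo (sInf C) (sSup C) ⊆ C := IsConnected.Ioo_csInf_csSup_subset ⟨hne, hc⟩ hbb hba
  have h2 : C ⊆ Ioo (sInf C) (sSup C) := by
    have := interior_mono (subset_Icc_csInf_csSup hbb hba)
    rwa [ho.interior_eq, interior_Icc] at this
  obtain ⟨x, hx⟩ := hne
  exact ⟨sInf C, sSup C, le_csInf ⟨x, hx⟩ fun y hy => (hsub hy).1.le,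
    (h2 hx).1.trans (h2 hx).2, csSup_le ⟨x, hx⟩ fun y hy => (hsub hy).2.le, h2.antisymm h1⟩

/-- The union of all open subsets of `(0, 1)` that are almost contained in `E` is itself almost
contained in `E`, by the Lindelöf property. -/
lemma measure_sUnion_almost_subset (E : Set ℝ) :
    volume (⋃₀ {O : Set ℝ | IsOpen O ∧ O ⊆ Ioo 0 1 ∧ volume (O \ E) = 0} \ E) = 0 := by
  obtain ⟨T, hTc, hTs, hTe⟩ := TopologicalSpace.isOpen_sUnion_countable
    {O : Set ℝ | IsOpen O ∧ O ⊆ Ioo 0 1 ∧ volume (O \ E) = 0} (fun O hO => hO.1)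
  rw [← hTe, sUnion_eq_biUnion]
  simp_rw [iUnion_sdiff]
  exact (measure_biUnion_null_iff hTc).2 fun O hO => (hTs hO).2.2

/-- Summing an interval bound over the connected components of an open set. -/
lemma lintegral_le_of_components (f : ℝ → ℝ≥0∞) (K : ℝ≥0∞) {W : Set ℝ} (hW : IsOpen W)
    (h : ∀ x ∈ W, ∫⁻ y in connectedComponentIn W x, f y
      ≤ K * volume (connectedComponentIn W x)) :
    ∫⁻ y in W, f y ≤ K * volume W := by
  set S : Set (Set ℝ) := (fun x => connectedComponentIn W x) '' W with hS
  have hopen : ∀ C ∈ S, IsOpen C := by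
    rintro _ ⟨x, -, rfl⟩
    exact hW.connectedComponentIn
  have hdisj : S.PairwiseDisjoint id := by
    rintro _ ⟨x, -, rfl⟩ _ ⟨y, -, rfl⟩ hxy
    rw [Function.onFun, Set.disjoint_left]
    intro z hz hz'
    exact hxy ((connectedComponentIn_eq hz).trans (connectedComponentIn_eq hz').symm)
  have hcount : S.Countable := hdisj.countable_of_isOpen hopen (by
    rintro _ ⟨x, hx, rfl⟩
    exact ⟨x, mem_connectedComponentIn hx⟩)
  have hWeq : W = ⋃ C : S, (C : Set ℝ) := by
    rw [← sUnion_eq_iUnion]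
    apply Subset.antisymm
    · exact fun x hx => ⟨_, ⟨x, hx, rfl⟩, mem_connectedComponentIn hx⟩
    · rintro x ⟨_, ⟨y, -, rfl⟩, hx⟩
      exact connectedComponentIn_subset _ _ hx
  have : Countable S := hcount.to_subtype
  have hvol : volume W = ∑' C : S, volume (C : Set ℝ) := by
    conv_lhs => rw [hWeq]
    refine measure_iUnion (fun C D hCD => ?_) (fun C => (hopen C C.2).measurableSet)
    exact hdisj C.2 D.2 (fun h => hCD (Subtype.ext h))
  calc ∫⁻ y in W, f y = ∫⁻ y in ⋃ C : S, (C : Set ℝ), f y := by rw [← hWeq]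
    _ ≤ ∑' C : S, ∫⁻ y in (C : Set ℝ), f y := lintegral_iUnion_le _ _
    _ ≤ ∑' C : S, K * volume (C : Set ℝ) := by
        refine ENNReal.tsum_le_tsum ?_
        rintro ⟨_, x, hx, rfl⟩
        exact h x hx
    _ = K * volume W := by rw [ENNReal.tsum_mul_left, hvol]

/-- The covering argument: a bound on all intervals not almost contained in `E` passes to `E`. -/
lemma lintegral_le_of_intervals (f : ℝ → ℝ≥0∞) (K : ℝ≥0∞) (hK : K ≠ ∞) {E : Set ℝ}
    (hE : E ⊆ Ioo 0 1) (hE1 : volume E < 1)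
    (h : ∀ a b : ℝ, 0 ≤ a → a < b → b ≤ 1 → volume (Ioo a b \ E) ≠ 0 →
      ∫⁻ x in Ioo a b, f x ≤ K * ENNReal.ofReal (b - a)) :
    ∫⁻ x in E, f x ≤ K * volume E := by
  -- It suffices to cover `E` by open sets of measure arbitrarily close to that of `E`.
  have key : ∀ r, volume E < r → r ≤ 1 → ∫⁻ x in E, f x ≤ K * r := by
    intro r hr hr1
    obtain ⟨U, hEU, hUo, hUr⟩ := E.exists_isOpen_lt_of_lt r hr
    set V := ⋃₀ {O : Set ℝ | IsOpen O ∧ O ⊆ Ioo 0 1 ∧ volume (O \ E) = 0} with hV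
    have hVE : volume (V \ E) = 0 := measure_sUnion_almost_subset E
    have hVo : IsOpen V := isOpen_sUnion fun O hO => hO.1
    set W := U ∩ Ioo 0 1 ∪ V with hWdef
    have hWo : IsOpen W := (hUo.inter isOpen_Ioo).union hVo
    have hW01 : W ⊆ Ioo 0 1 :=
      union_subset inter_subset_right (sUnion_subset fun O hO => hO.2.1)
    have hEW : E ⊆ W := fun x hx => Or.inl ⟨hEU hx, hE hx⟩
    have hWr : volume W < r := by
      refine lt_of_le_of_lt ?_ hUr
      calc volume W ≤ volume (U ∪ V \ E) := by
            apply measure_mono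
            rintro x (hx | hx)
            · exact Or.inl hx.1
            · by_cases hxE : x ∈ E
              · exact Or.inl (hEU hxE)
              · exact Or.inr ⟨hx, hxE⟩
        _ ≤ volume U + volume (V \ E) := measure_union_le _ _
        _ = volume U := by rw [hVE, add_zero]
    refine (lintegral_mono_set hEW).trans
      ((lintegral_le_of_components f K hWo ?_).trans (by gcongr))
    intro x hx
    obtain ⟨a, b, ha, hab, hb, hC⟩ := exists_eq_Ioo hWo.connectedComponentIn
      isPreconnected_connectedComponentIn ⟨x, mem_connectedComponentIn hx⟩
      ((connectedComponentIn_subset W x).trans hW01)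
    have hxC : x ∈ Ioo a b := hC ▸ mem_connectedComponentIn hx
    rw [hC, Real.volume_Ioo]
    have hstep : ∀ δ : ℝ, 0 < δ →
        ∫⁻ y in Ioo a b, f y ≤ K * ENNReal.ofReal (b - a + 2 * δ) := by
      intro δ hδ
      have ha' : max (a - δ) 0 ≤ a := max_le (by linarith) ha
      have hb' : b ≤ min (b + δ) 1 := le_min (by linarith) hb
      have hsub : Ioo a b ⊆ Ioo (max (a - δ) 0) (min (b + δ) 1) := Ioo_subset_Ioo ha' hb'
      refine (lintegral_mono_set hsub).trans ((h _ _ (le_max_right _ _) (by linarith)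
        (min_le_right _ _) ?_).trans ?_)
      · intro h0
        -- Otherwise the enlarged interval lies in `V`, hence in the component, which must
        -- then be all of `(0, 1)`.
        have hsV : Ioo (max (a - δ) 0) (min (b + δ) 1) ⊆ W := fun y hy =>
          Or.inr ⟨_, ⟨isOpen_Ioo, Ioo_subset_Ioo (le_max_right _ _) (min_le_right _ _), h0⟩, hy⟩
        have hsC := isPreconnected_Ioo.subset_connectedComponentIn (hsub hxC) hsV
        rw [hC, Ioo_subset_Ioo_iff (by linarith)] at hsC
        have ha0 : a ≤ 0 := by
          by_contra! hcon
          exact absurd hsC.1 (not_le.2 (max_lt (by linarith) hcon))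
        have hb1 : 1 ≤ b := by
          by_contra! hcon
          exact absurd hsC.2 (not_le.2 (lt_min (by linarith) hcon))
        have : (1 : ℝ≥0∞) ≤ volume W := by
          calc (1 : ℝ≥0∞) = volume (Ioo (0 : ℝ) 1) := by simp
            _ ≤ volume W := measure_mono ((Ioo_subset_Ioo ha0 hb1).trans
                (hC ▸ connectedComponentIn_subset W x))
        exact absurd (hWr.trans_le hr1) (not_lt.2 this)
      · gcongr
        have := le_max_left (a - δ) 0
        have := min_le_left (b + δ) 1
        linarith
    have hlim : Filter.Tendsto (fun δ : ℝ => K * ENNReal.ofReal (b - a + 2 * δ)) (𝓝[>] 0)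
        (𝓝 (K * ENNReal.ofReal (b - a))) := by
      refine ENNReal.Tendsto.const_mul ?_ (Or.inr hK)
      refine ENNReal.tendsto_ofReal (Filter.Tendsto.mono_left ?_ nhdsWithin_le_nhds)
      have : Continuous fun δ : ℝ => b - a + 2 * δ := by fun_prop
      simpa using this.tendsto 0
    exact ge_of_tendsto hlim (by filter_upwards [self_mem_nhdsWithin] with δ hδ using hstep δ hδ)
  have hne : (𝓝[>] (volume E)).NeBot := nhdsGT_neBot_of_exists_gt ⟨1, hE1⟩
  have hlim : Filter.Tendsto (fun r : ℝ≥0∞ => K * r) (𝓝[>] (volume E)) (𝓝 (K * volume E)) :=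
    ENNReal.Tendsto.const_mul (Filter.tendsto_id.mono_left nhdsWithin_le_nhds) (Or.inr hK)
  refine ge_of_tendsto hlim ?_
  filter_upwards [Ioc_mem_nhdsGT hE1] with r hr using key r hr.1 hr.2

/-- The `A₁` bound on an interval, with the essential infimum replaced by any upper bound `l` of
the almost everywhere lower bounds of `φ`. -/
lemma lintegral_le_of_A1 {c : ℝ} (hc : 1 ≤ c) {φ : ℝ → ℝ}
    (hφ0 : ∀ x ∈ Ioo (0:ℝ) 1, 0 ≤ φ x) (hφint : IntegrableOn φ (Ioo (0:ℝ) 1))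
    {a b l : ℝ} (ha : 0 ≤ a) (hab : a < b) (hb : b ≤ 1)
    (hA1 : (1/(b-a)) * ∫ x in Ioo a b, φ x ≤ c * essInf φ (volume.restrict (Ioo a b)))
    (hl : ∀ m : ℝ, (∀ᵐ x ∂(volume.restrict (Ioo a b)), m ≤ φ x) → m ≤ l) :
    ∫⁻ x in Ioo a b, ENNReal.ofReal (φ x)
      ≤ ENNReal.ofReal (c * l) * ENNReal.ofReal (b - a) := by
  have hsub : Ioo a b ⊆ Ioo 0 1 := Ioo_subset_Ioo ha hb
  have hnn : ∀ᵐ x ∂(volume.restrict (Ioo a b)), 0 ≤ φ x :=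
    (ae_restrict_mem measurableSet_Ioo).mono fun x hx => hφ0 x (hsub hx)
  have hinf : essInf φ (volume.restrict (Ioo a b)) ≤ l := by
    rw [essInf, Filter.liminf_eq]
    exact csSup_le ⟨0, hnn⟩ hl
  have hba : 0 < b - a := by linarith
  have hint : ∫ x in Ioo a b, φ x ≤ c * l * (b - a) := by
    have h1 : (1/(b-a)) * ∫ x in Ioo a b, φ x ≤ c * l :=
      hA1.trans (mul_le_mul_of_nonneg_left hinf (by linarith))
    rwa [one_div_mul_eq_div, div_le_iff₀ hba] at h1
  rw [← ofReal_integral_eq_lintegral_ofReal (hφint.mono_set hsub) hnn,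
    ← ENNReal.ofReal_mul' hba.le]
  exact ENNReal.ofReal_le_ofReal hint

/-- Equimeasurability above level `l` makes the parts of `φ` and `g` above `l` have the same
integral; both sides are computed by the layer-cake formula. -/
lemma lintegral_sub_eq {φ g : ℝ → ℝ} (hφ : AEMeasurable φ (volume.restrict (Ioo (0:ℝ) 1)))
    (hg : AEMeasurable g (volume.restrict (Ioc (0:ℝ) 1)))
    (hequi : ∀ l : ℝ, 0 < l →
      volume {x ∈ Ioo (0:ℝ) 1 | l < φ x} = volume {t ∈ Ioc (0:ℝ) 1 | l < g t})
    {l : ℝ} (hl : 0 ≤ l) :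
    ∫⁻ x in Ioo (0:ℝ) 1, ENNReal.ofReal (φ x - l)
      = ∫⁻ x in Ioc (0:ℝ) 1, ENNReal.ofReal (g x - l) := by
  have gen : ∀ (S : Set ℝ) (f : ℝ → ℝ), MeasurableSet S → AEMeasurable f (volume.restrict S) →
      ∫⁻ x in S, ENNReal.ofReal (f x - l)
        = ∫⁻ r in Ioi (0:ℝ), volume {x ∈ S | r + l < f x} := by
    intro S f hS hf
    have h1 : ∀ x, ENNReal.ofReal (f x - l) = ENNReal.ofReal (max (f x - l) 0) := fun x => by
      simp [ENNReal.ofReal, Real.toNNReal]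
    simp_rw [h1]
    rw [lintegral_eq_lintegral_meas_lt (f := fun x => max (f x - l) 0) _
      (Filter.Eventually.of_forall fun x => le_max_right _ _)
      ((hf.sub_const l).max aemeasurable_const)]
    refine setLIntegral_congr_fun measurableSet_Ioi fun r hr => ?_
    rw [Measure.restrict_apply' hS]
    congr 1
    ext x
    have hr' : 0 < r := hr
    simp only [mem_inter_iff, mem_ofPred_eq, lt_max_iff, not_lt.2 hr'.le, or_false,
      lt_sub_iff_add_lt]
    exact and_comm
  rw [gen _ _ measurableSet_Ioo hφ, gen _ _ measurableSet_Ioc hg]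
  refine setLIntegral_congr_fun measurableSet_Ioi fun r hr => ?_
  exact hequi _ (add_pos_of_pos_of_nonneg hr hl)

theorem rearrangement_of_A1_is_A1 (c : ℝ) (hc : 1 ≤ c)
    (φ : ℝ → ℝ) (hφ0 : ∀ x ∈ Ioo (0:ℝ) 1, 0 ≤ φ x)
    (hφint : IntegrableOn φ (Ioo (0:ℝ) 1))
    (hA1 : ∀ a b : ℝ, 0 ≤ a → a < b → b ≤ 1 →
      (1/(b-a)) * ∫ x in Ioo a b, φ x ≤ c * essInf φ (volume.restrict (Ioo a b)))
    (g : ℝ → ℝ)  -- g is the non-increasing, left-continuous rearrangement φ* of φ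
    (hg0 : ∀ t ∈ Ioc (0:ℝ) 1, 0 ≤ g t)
    (hmono : AntitoneOn g (Ioc (0:ℝ) 1))
    (hlc : ∀ t ∈ Ioc (0:ℝ) 1, ContinuousWithinAt g (Iic t) t)
    (hequi : ∀ l : ℝ, 0 < l →
      volume {x ∈ Ioo (0:ℝ) 1 | l < φ x} = volume {t ∈ Ioc (0:ℝ) 1 | l < g t}) :
    ∀ t ∈ Ioc (0:ℝ) 1, (1/t) * ∫ y in Ioc (0:ℝ) t, g y ≤ c * g t := by
  intro t ht
  have hl0 : 0 ≤ g t := hg0 t ht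
  have hφm : AEMeasurable φ (volume.restrict (Ioo (0:ℝ) 1)) := hφint.aemeasurable
  have hgm : AEMeasurable g (volume.restrict (Ioc (0:ℝ) 1)) :=
    aemeasurable_restrict_of_antitoneOn measurableSet_Ioc hmono
  have htsub : Ioc 0 t ⊆ Ioc 0 1 := Ioc_subset_Ioc_right ht.2
  set lam := g t with hlam
  set E : Set ℝ := {x ∈ Ioo (0:ℝ) 1 | lam < φ x} with hEdef
  have hEsub : E ⊆ Ioo 0 1 := fun x hx => hx.1
  have hEnull : NullMeasurableSet E := by
    obtain ⟨ψ, hψ, he⟩ := hφm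
    have hae := (ae_restrict_iff' measurableSet_Ioo).1 he
    refine (measurableSet_Ioo.inter (measurableSet_lt measurable_const hψ) :
      MeasurableSet (Ioo (0:ℝ) 1 ∩ {x | lam < ψ x})).nullMeasurableSet.congr ?_
    refine Filter.eventuallyEq_set.2 ?_
    filter_upwards [hae] with x hx
    constructor
    · rintro ⟨h1, h2⟩
      exact ⟨h1, by rw [hx h1]; exact h2⟩
    · rintro ⟨h1, h2⟩
      exact ⟨h1, by rw [hx h1] at h2; exact h2⟩
  -- `hequi` is not available at level `0`, so `E` is exhausted by strictly higher level sets.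
  have hEt : volume E ≤ ENNReal.ofReal t := by
    have hEU : E = ⋃ n : ℕ, {x ∈ Ioo (0:ℝ) 1 | lam + 1 / ((n:ℝ) + 1) < φ x} := by
      ext x
      simp only [hEdef, mem_ofPred_eq, mem_iUnion]
      constructor
      · rintro ⟨h1, h2⟩
        obtain ⟨n, hn⟩ := exists_nat_one_div_lt (sub_pos.2 h2)
        exact ⟨n, h1, by linarith⟩
      · rintro ⟨n, h1, h2⟩
        have : 0 < 1 / ((n:ℝ) + 1) := Nat.one_div_pos_of_nat
        exact ⟨h1, by linarith⟩
    have hmn : Monotone fun n : ℕ => {x ∈ Ioo (0:ℝ) 1 | lam + 1 / ((n:ℝ) + 1) < φ x} := by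
      intro n m hnm x hx
      have := Nat.one_div_le_one_div (α := ℝ) hnm
      exact ⟨hx.1, by linarith [hx.2]⟩
    rw [hEU, hmn.measure_iUnion]
    refine iSup_le fun n => ?_
    have hn : 0 < 1 / ((n:ℝ) + 1) := Nat.one_div_pos_of_nat
    rw [hequi _ (by linarith)]
    calc _ ≤ volume (Ioc 0 t) := by
          apply measure_mono
          rintro y ⟨hy, hy2⟩
          refine ⟨hy.1, ?_⟩
          by_contra! hty
          have := hmono ht hy hty.le
          linarith
      _ = ENNReal.ofReal t := by simp
  have hmain : ∫⁻ x in E, ENNReal.ofReal (φ x) ≤ ENNReal.ofReal (c * lam) * volume E := by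
    rcases lt_or_ge (volume E) 1 with hE1 | hE1
    · refine lintegral_le_of_intervals _ _ ENNReal.ofReal_ne_top hEsub hE1 ?_
      intro a b ha hab hb hpos
      refine lintegral_le_of_A1 hc hφ0 hφint ha hab hb (hA1 a b ha hab hb) fun m hm => ?_
      by_contra! hlm
      apply hpos
      have hm' := (ae_restrict_iff' measurableSet_Ioo).1 hm
      refine measure_mono_null ?_ (ae_iff.1 hm')
      rintro x ⟨hx, hxE⟩ hcon
      exact hxE ⟨Ioo_subset_Ioo ha hb hx, hlm.trans_le (hcon hx)⟩
    · have ht1 : t = 1 := le_antisymm ht.2 (by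
        have := hE1.trans hEt
        rwa [ENNReal.one_le_ofReal] at this)
      have h01 := lintegral_le_of_A1 (l := lam) hc hφ0 hφint le_rfl zero_lt_one le_rfl
        (hA1 0 1 le_rfl zero_lt_one le_rfl) (fun m hm => by
          by_contra! hlm
          obtain ⟨l, hl1, hl2⟩ := exists_between hlm
          have hlc1 := hlc t ht
          have hev : ∀ᶠ y in 𝓝[≤] t, g y < l := hlc1.eventually_lt_const hl1
          obtain ⟨d, hd, hdl⟩ := (mem_nhdsLE_iff_exists_Ioc_subset).1 hev
          -- left-continuity keeps `g` below `l` on `(d', 1]`, so `|{l < g}| ≤ d' < 1`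
          set d' := max d 0 with hd'
          have hd1 : d' < 1 := max_lt (ht1 ▸ hd) zero_lt_one
          have hle : volume {y ∈ Ioc (0:ℝ) 1 | l < g y} ≤ ENNReal.ofReal d' := by
            calc _ ≤ volume (Ioc 0 d') := by
                  apply measure_mono
                  rintro y ⟨hy, hy2⟩
                  refine ⟨hy.1, ?_⟩
                  by_contra! hcon
                  have : g y < l :=
                    hdl ⟨(le_max_left _ _).trans_lt hcon, hy.2.trans ht1.ge⟩
                  linarith
              _ = ENNReal.ofReal d' := by simp
          rw [← hequi l (by linarith)] at hle
          have hge : (1 : ℝ≥0∞) ≤ volume {x ∈ Ioo (0:ℝ) 1 | l < φ x} := by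
            calc (1 : ℝ≥0∞) = volume (Ioo (0:ℝ) 1) := by simp
              _ ≤ _ := by
                apply measure_mono_ae
                filter_upwards [(ae_restrict_iff' measurableSet_Ioo).1 hm] with x hx hx1
                exact ⟨hx1, hl2.trans_le (hx hx1)⟩
          have := hge.trans hle
          rw [ENNReal.one_le_ofReal] at this
          linarith)
      refine (lintegral_mono_set hEsub).trans (h01.trans ?_)
      gcongr
      simpa using hE1
  have hX : (∫⁻ x in Ioo (0:ℝ) 1, ENNReal.ofReal (φ x - lam))
      + ENNReal.ofReal lam * volume E ≤ ENNReal.ofReal (c * lam) * volume E := by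
    refine le_trans ?_ hmain
    have h1 : ∫⁻ x in Ioo (0:ℝ) 1, ENNReal.ofReal (φ x - lam)
        ≤ ∫⁻ x in E, ENNReal.ofReal (φ x - lam) := by
      have h0 : ∫⁻ x in Ioo (0:ℝ) 1 \ E, ENNReal.ofReal (φ x - lam) = 0 := by
        refine (lintegral_congr_ae ?_).trans lintegral_zero
        filter_upwards [ae_restrict_mem₀ (measurableSet_Ioo.nullMeasurableSet.diff hEnull)]
          with x hx
        have : φ x ≤ lam := not_lt.1 fun h => hx.2 ⟨hx.1, h⟩
        exact ENNReal.ofReal_of_nonpos (by linarith)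
      have h2 := lintegral_union_le (μ := volume) (fun x => ENNReal.ofReal (φ x - lam)) E
        (Ioo (0:ℝ) 1 \ E)
      rwa [h0, add_zero, union_sdiff_cancel hEsub] at h2
    refine (add_le_add_left h1 _).trans (le_of_eq ?_)
    rw [← setLIntegral_const, ← lintegral_add_right _ measurable_const]
    refine lintegral_congr_ae ?_
    filter_upwards [ae_restrict_mem₀ hEnull] with x hx
    rw [← ENNReal.ofReal_add (by linarith [hx.2]) hl0, sub_add_cancel]
  rw [lintegral_sub_eq hφm hgm hequi hl0] at hX
  set X := ∫⁻ x in Ioc (0:ℝ) 1, ENNReal.ofReal (g x - lam) with hXdef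
  have hEfin : volume E ≠ ∞ := ne_top_of_le_ne_top ENNReal.ofReal_ne_top hEt
  have hgX : ∫⁻ y in Ioc (0:ℝ) t, ENNReal.ofReal (g y)
      ≤ X + ENNReal.ofReal lam * ENNReal.ofReal t := by
    calc ∫⁻ y in Ioc (0:ℝ) t, ENNReal.ofReal (g y)
        ≤ ∫⁻ y in Ioc (0:ℝ) t, (ENNReal.ofReal (g y - lam) + ENNReal.ofReal lam) := by
          refine lintegral_mono fun y => ?_
          calc ENNReal.ofReal (g y) = ENNReal.ofReal ((g y - lam) + lam) := by
                rw [sub_add_cancel]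
            _ ≤ _ := ENNReal.ofReal_add_le
      _ = (∫⁻ y in Ioc (0:ℝ) t, ENNReal.ofReal (g y - lam))
            + ENNReal.ofReal lam * ENNReal.ofReal t := by
          rw [lintegral_add_right _ measurable_const, setLIntegral_const, Real.volume_Ioc,
            sub_zero]
      _ ≤ _ := add_le_add_left (lintegral_mono_set htsub) _
  have hXle : X ≤ ENNReal.ofReal ((c - 1) * lam * t) := by
    have h2 : X + ENNReal.ofReal lam * volume E
        ≤ ENNReal.ofReal ((c - 1) * lam) * volume E + ENNReal.ofReal lam * volume E := by
      rw [← add_mul, ← ENNReal.ofReal_add (mul_nonneg (by linarith) hl0) hl0]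
      convert hX using 3
      ring
    have h3 := (ENNReal.add_le_add_iff_right
      (ENNReal.mul_ne_top ENNReal.ofReal_ne_top hEfin)).1 h2
    rw [ENNReal.ofReal_mul' ht.1.le]
    exact h3.trans (by gcongr)
  have htot : ∫⁻ y in Ioc (0:ℝ) t, ENNReal.ofReal (g y) ≤ ENNReal.ofReal (c * lam * t) := by
    refine (hgX.trans (add_le_add_left hXle _)).trans (le_of_eq ?_)
    rw [← ENNReal.ofReal_mul hl0, ← ENNReal.ofReal_add
      (mul_nonneg (mul_nonneg (by linarith) hl0) ht.1.le) (mul_nonneg hl0 ht.1.le)]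
    congr 1
    ring
  have hint : ∫ y in Ioc (0:ℝ) t, g y ≤ c * lam * t := by
    rw [integral_eq_lintegral_of_nonneg_ae
      ((ae_restrict_mem measurableSet_Ioc).mono fun y hy => hg0 y (htsub hy))
      (hgm.mono_measure (Measure.restrict_mono htsub le_rfl)).aestronglyMeasurable]
    exact ENNReal.toReal_le_of_le_ofReal
      (mul_nonneg (mul_nonneg (by linarith) hl0) ht.1.le) htot
  rwa [one_div_mul_eq_div, div_le_iff₀ ht.1]
end

section
/- Let φ : (0,1) → ℝ≥0 be integrable and belong to A₁((0,1)) with constant c > 1, i.e. (1/|I|)∫_I φ ≤ c·essinf_I φ for every subinterval I ⊆ (0,1). Then for every p with 1 ≤ p < c/(c−1) and every subinterval I of (0,1): (1/|I|)·∫_I φ(x)^p dx ≤ (1/(c^(p-1)·(c + p − p·c)))·((1/|I|)·∫_I φ(x) dx)^p. -/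
/-!
Write `I = (a, b)`, let `A` be the average of `φ` over `I`, and put `m = A / c`, so that
`φ ≥ m` almost everywhere on `I` by the `A₁` condition.

The heart of the matter is the sharp level set inequality `∫_{φ > t} φ ≤ c t |{φ > t}|` for
`t ≥ m` (`level_set_estimate`). Cover `{φ > t}` by an open subset `G` of `I` of almost the same
measure, chosen so that `I \ G` has no measure-theoretically isolated points. Enlarging a
component of `G` slightly then captures a set of positive measure on which `φ ≤ t`, so the `A₁`
condition bounds the average of `φ` over the component by `c t`; if the only component is `I`
itself, the bound is `A = c m ≤ c t`. Summing over the components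
(`measure_le_of_components`) and letting `|G|` decrease to `|{φ > t}|` gives the claim.

Integrating the level set inequality against `t ^ (p - 2)` over `(m, N)` and using Fubini
(`truncated_moment_le`) gives, for `X` the average over `I` of `min N φ ^ p`,
`(c + p - p c) X ≤ p m ^ (p - 1) A - c (p - 1) m ^ p`, and for `m = A / c` the right-hand side is
`A ^ p / c ^ (p - 1)`. The truncation keeps all integrals finite, and letting `N → ∞`
finishes the proof.
-/

open MeasureTheory Set

/-! ### The level set inequality -/

/-- Two measures can be compared on an open set `G ⊆ ℝ` by comparing them on the connected
components of `G`. The hypotheses `hlo` and `hhi` say that every component is bounded; the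
components are then exactly the intervals `(α, β) ⊆ G` with endpoints outside `G`. -/
lemma measure_le_of_components {G : Set ℝ} (hG : IsOpen G)
    (hlo : ∀ x ∈ G, ∃ y ≤ x, y ∉ G) (hhi : ∀ x ∈ G, ∃ y, x ≤ y ∧ y ∉ G)
    (ν μ : Measure ℝ)
    (h : ∀ α β : ℝ, α < β → Ioo α β ⊆ G → α ∉ G → β ∉ G → ν (Ioo α β) ≤ μ (Ioo α β)) :
    ν G ≤ μ G := by
  set S : Set (ℝ × ℝ) := {q | q.1 < q.2 ∧ Ioo q.1 q.2 ⊆ G ∧ q.1 ∉ G ∧ q.2 ∉ G} with hS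
  have hdisj : S.PairwiseDisjoint (fun q => Ioo q.1 q.2) := by
    rintro ⟨α, β⟩ ⟨_, h1, h2, h3⟩ ⟨α', β'⟩ ⟨_, h1', h2', h3'⟩ hne
    refine Set.disjoint_left.2 fun z hz hz' => hne ?_
    simp only [mem_Ioo] at *
    have e1 : α = α' := by
      rcases lt_trichotomy α α' with hlt | heq | hgt
      · exact absurd (h1 ⟨hlt, hz'.1.trans hz.2⟩) h2'
      · exact heq
      · exact absurd (h1' ⟨hgt, hz.1.trans hz'.2⟩) h2
    have e2 : β = β' := by
      rcases lt_trichotomy β β' with hlt | heq | hgt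
      · exact absurd (h1' ⟨hz'.1.trans hz.2, hlt⟩) h3
      · exact heq
      · exact absurd (h1 ⟨hz.1.trans hz'.2, hgt⟩) h3'
    rw [e1, e2]
  have hcount : S.Countable :=
    hdisj.countable_of_isOpen (fun _ _ => isOpen_Ioo) (fun q hq => nonempty_Ioo.2 hq.1)
  have hunion : G = ⋃ q ∈ S, Ioo q.1 q.2 := by
    refine Subset.antisymm (fun x hx => ?_) (iUnion₂_subset fun q hq => hq.2.1)
    obtain ⟨y, hyx, hy⟩ := hlo x hx
    obtain ⟨w, hxw, hw⟩ := hhi x hx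
    have hcl : IsClosed Gᶜ := hG.isClosed_compl
    have hA : sSup (Gᶜ ∩ Iic x) ∈ Gᶜ ∩ Iic x :=
      (hcl.inter isClosed_Iic).csSup_mem ⟨y, hy, hyx⟩ ⟨x, fun _ h => h.2⟩
    have hB : sInf (Gᶜ ∩ Ici x) ∈ Gᶜ ∩ Ici x :=
      (hcl.inter isClosed_Ici).csInf_mem ⟨w, hw, hxw⟩ ⟨x, fun _ h => h.2⟩
    have hA' : sSup (Gᶜ ∩ Iic x) < x := lt_of_le_of_ne hA.2 fun e => hA.1 (by rwa [e])
    have hB' : x < sInf (Gᶜ ∩ Ici x) := lt_of_le_of_ne hB.2 fun e => hB.1 (by rwa [← e])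
    refine mem_iUnion₂.2 ⟨(sSup (Gᶜ ∩ Iic x), sInf (Gᶜ ∩ Ici x)),
      ⟨hA'.trans hB', fun z hz => ?_, hA.1, hB.1⟩, hA', hB'⟩
    by_contra hzG
    rcases le_total z x with hzx | hzx
    · exact absurd hz.1 (not_lt.2 (le_csSup ⟨x, fun _ h => h.2⟩ ⟨hzG, hzx⟩))
    · exact absurd hz.2 (not_lt.2 (csInf_le ⟨x, fun _ h => h.2⟩ ⟨hzG, hzx⟩))
  rw [hunion, measure_biUnion hcount hdisj fun _ _ => measurableSet_Ioo,
    measure_biUnion hcount hdisj fun _ _ => measurableSet_Ioo]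
  exact ENNReal.tsum_le_tsum fun q => h _ _ q.2.1 q.2.2.1 q.2.2.2.1 q.2.2.2.2

/-- The level set inequality, for an `A₁` function `F` with values in `[0, ∞]` and a level `l` which
is at least the average of `F` over `(a, b)` divided by the `A₁` constant `c`. The constant `c` is
not increased, which is what makes the reverse Hölder constant sharp. -/
lemma level_set_estimate {a b : ℝ} (F : ℝ → ENNReal) (hF : Measurable F) (c l : ENNReal)
    (hcl : c * l ≠ ⊤)
    (hA : ∀ α β : ℝ, a ≤ α → α < β → β ≤ b →
      ∀ᵐ x ∂volume.restrict (Ioo α β), ∫⁻ t in Ioo α β, F t ≤ c * F x * volume (Ioo α β))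
    (hl : ∫⁻ t in Ioo a b, F t ≤ c * l * volume (Ioo a b)) :
    ∫⁻ t in Ioo a b ∩ {x | l < F x}, F t ≤ c * l * volume (Ioo a b ∩ {x | l < F x}) := by
  set E := Ioo a b ∩ {x | l < F x} with hE
  have hQm : MeasurableSet (Ioo a b ∩ {x | F x ≤ l}) :=
    measurableSet_Ioo.inter (measurableSet_le hF measurable_const)
  have hQfin : volume (Ioo a b ∩ {x | F x ≤ l}) ≠ ⊤ :=
    measure_ne_top_of_subset inter_subset_left (by simp)
  suffices H : ∀ ε : ENNReal, ε ≠ 0 → ∫⁻ t in E, F t ≤ c * l * (volume E + ε) by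
    have : Filter.Tendsto (fun ε : ENNReal => c * l * (volume E + ε)) (nhdsWithin 0 (Ioi 0))
        (nhds (c * l * (volume E + 0))) := by
      refine ENNReal.Tendsto.const_mul (Filter.Tendsto.const_add _ ?_) (Or.inr hcl)
      exact Filter.tendsto_id.mono_left nhdsWithin_le_nhds
    rw [add_zero] at this
    exact ge_of_tendsto this (Filter.eventually_of_mem self_mem_nhdsWithin fun ε hε => H ε (ne_of_gt hε))
  intro ε hε
  obtain ⟨K, hKQ, hKc, hKε⟩ := hQm.exists_isCompact_sdiff_lt hQfin hε
  -- Passing from `K` to the support `D` of Lebesgue measure on `K` discards a null set, and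
  -- every neighbourhood of a point of `D` now meets `{F ≤ l}` in positive measure.
  set D := (volume.restrict K).support with hD
  have hDK : D ⊆ K :=
    (Measure.support_restrict_subset.trans inter_subset_left).trans hKc.isClosed.closure_eq.subset
  have hKD : volume (K \ D) = 0 := by
    have := Measure.measure_compl_support (μ := volume.restrict K)
    rwa [Measure.restrict_apply Measure.isOpen_compl_support.measurableSet, inter_comm,
      ← sdiff_eq] at this
  set G := Ioo a b \ D with hG
  have hGo : IsOpen G := isOpen_Ioo.sdiff Measure.isClosed_support
  have hEG : E ⊆ G := fun x ⟨hx1, hx2⟩ =>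
    ⟨hx1, fun hxD => by
      have h1 : F x ≤ l := (hKQ (hDK hxD)).2
      have h2 : l < F x := hx2
      exact h1.not_gt h2⟩
  have hGvol : volume G ≤ volume E + ε := by
    have : G ⊆ E ∪ ((Ioo a b ∩ {x | F x ≤ l}) \ K ∪ K \ D) := by
      intro x hx
      by_cases h1 : l < F x
      · exact Or.inl ⟨hx.1, h1⟩
      · by_cases h2 : x ∈ K
        · exact Or.inr (Or.inr ⟨h2, hx.2⟩)
        · exact Or.inr (Or.inl ⟨⟨hx.1, not_lt.1 h1⟩, h2⟩)
    calc volume G ≤ volume E + (volume ((Ioo a b ∩ {x | F x ≤ l}) \ K) + volume (K \ D)) :=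
          (measure_mono this).trans ((measure_union_le _ _).trans
            (add_le_add le_rfl (measure_union_le _ _)))
      _ ≤ volume E + ε := by rw [hKD, add_zero]; gcongr
  have key : ∀ z ∈ D, ∀ α β : ℝ, a ≤ α → α < z → z < β → β ≤ b →
      ∫⁻ t in Ioo α β, F t ≤ c * l * volume (Ioo α β) := by
    intro z hz α β h1 h2 h3 h4
    have hpos := (Measure.mem_support_iff_forall z).1 hz (Ioo α β) (Ioo_mem_nhds h2 h3)
    rw [Measure.restrict_apply measurableSet_Ioo] at hpos
    have hae := hA α β h1 (h2.trans h3) h4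
    rw [ae_restrict_iff' measurableSet_Ioo] at hae
    obtain ⟨x, hx, hx'⟩ := ((frequently_ae_mem_iff.2 hpos.ne').and_eventually hae).exists
    refine (hx' hx.1).trans ?_
    gcongr
    exact (hKQ hx.2).2
  have hGle : (volume.withDensity F) G ≤ ((c * l) • volume : Measure ℝ) G := by
    refine measure_le_of_components hGo (fun x hx => ⟨a, hx.1.1.le, fun h => h.1.1.false⟩)
      (fun x hx => ⟨b, hx.1.2.le, fun h => h.1.2.false⟩) _ _ fun α β hαβ hsub hα hβ => ?_
    obtain ⟨haα, hβb⟩ := (Ioo_subset_Ioo_iff hαβ).1 (hsub.trans sdiff_subset)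
    rw [withDensity_apply _ measurableSet_Ioo, Measure.smul_apply, smul_eq_mul]
    by_cases h : α = a ∧ β = b
    · rw [h.1, h.2]; exact hl
    have hlim : ∀ u v : ℝ, Filter.Tendsto (fun δ : ℝ => c * l * ENNReal.ofReal (v - u + δ))
        (nhdsWithin 0 (Ioi 0)) (nhds (c * l * ENNReal.ofReal (v - u))) := by
      intro u v
      refine ENNReal.Tendsto.const_mul ?_ (Or.inr hcl)
      refine ENNReal.tendsto_ofReal ?_
      have : Filter.Tendsto (fun δ : ℝ => v - u + δ) (nhds 0) (nhds (v - u + 0)) :=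
        tendsto_const_nhds.add Filter.tendsto_id
      rw [add_zero] at this
      exact this.mono_left nhdsWithin_le_nhds
    rw [Real.volume_Ioo]
    -- An endpoint of the component that differs from `a` and `b` lies in `D`; move it outwards
    -- by `δ`, apply `key`, and let `δ → 0`.
    rcases not_and_or.1 h with h | h
    · have haα' : a < α := lt_of_le_of_ne haα (Ne.symm h)
      have hαD : α ∈ D := by
        by_contra hn; exact hα ⟨⟨haα', hαβ.trans_le hβb⟩, hn⟩
      refine ge_of_tendsto (hlim α β) ?_
      filter_upwards [Ioo_mem_nhdsGT (sub_pos.2 haα')] with δ hδ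
      have := key α hαD (α - δ) β (by linarith [hδ.2]) (by linarith [hδ.1]) hαβ hβb
      rw [Real.volume_Ioo, show β - (α - δ) = β - α + δ by ring] at this
      exact (lintegral_mono_set (Ioo_subset_Ioo_left (by linarith [hδ.1]))).trans this
    · have hβb' : β < b := lt_of_le_of_ne hβb h
      have hβD : β ∈ D := by
        by_contra hn; exact hβ ⟨⟨haα.trans_lt hαβ, hβb'⟩, hn⟩
      refine ge_of_tendsto (hlim α β) ?_
      filter_upwards [Ioo_mem_nhdsGT (sub_pos.2 hβb')] with δ hδ
      have := key β hβD α (β + δ) haα hαβ (by linarith [hδ.1]) (by linarith [hδ.2])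
      rw [Real.volume_Ioo, show β + δ - α = β - α + δ by ring] at this
      exact (lintegral_mono_set (Ioo_subset_Ioo_right (by linarith [hδ.1]))).trans this
  rw [withDensity_apply _ hGo.measurableSet, Measure.smul_apply, smul_eq_mul] at hGle
  calc ∫⁻ t in E, F t ≤ ∫⁻ t in G, F t := lintegral_mono_set hEG
    _ ≤ c * l * volume G := hGle
    _ ≤ c * l * (volume E + ε) := by gcongr

/-! ### From level sets to moments -/

/-- The `p`-th moment of the truncation `min N f`, from the level set inequality: integrate
`t ^ (p - 2) * ∫_{t < f} (f - c t) ≤ 0` over `t ∈ (m, N)` and exchange the integrals. -/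
lemma truncated_moment_le {X : Type*} [MeasurableSpace X] (μ : Measure X) [IsFiniteMeasure μ]
    {f : X → ℝ} (hf : Measurable f) (hfi : Integrable f μ) {c m N p : ℝ}
    (hm : 0 < m) (hN : m ≤ N) (hp : 1 < p) (hmf : ∀ᵐ x ∂μ, m ≤ f x)
    (hlev : ∀ t, m ≤ t → ∫ x in {x | t < f x}, f x ∂μ ≤ c * t * μ.real {x | t < f x}) :
    (p - c * (p - 1)) * ∫ x, min N (f x) ^ p ∂μ
      ≤ p * m ^ (p - 1) * ∫ x, f x ∂μ - c * (p - 1) * m ^ p * μ.real univ := by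
  set τ : Measure ℝ := volume.restrict (Ioo m N) with hτ
  set S : Set (X × ℝ) := {z | z.2 < f z.1} with hS
  have hSm : MeasurableSet S := measurableSet_lt measurable_snd (hf.comp measurable_fst)
  have hpow : ∀ r : ℝ, Integrable (fun t : ℝ => t ^ r) τ := fun r => by
    have : IntegrableOn (fun t : ℝ => t ^ r) (Icc m N) :=
      ContinuousOn.integrableOn_Icc fun t ht =>
        (Real.continuousAt_rpow_const t r (Or.inl (hm.trans_le ht.1).ne')).continuousWithinAt
    exact this.mono_set Ioo_subset_Icc_self
  -- The factor `1` puts the second term in the product form required by `Integrable.mul_prod`.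
  set g : X → ℝ → ℝ := fun x t =>
    S.indicator (fun z => f z.1 * z.2 ^ (p - 2) - 1 * (c * z.2 ^ (p - 1))) (x, t) with hg
  have hgi : Integrable (Function.uncurry g) (μ.prod τ) :=
    ((hfi.mul_prod (hpow (p - 2))).sub
      ((integrable_const (1 : ℝ)).mul_prod ((hpow (p - 1)).const_mul c))).indicator hSm
  have hswap := integral_integral_swap hgi
  have hright : ∫ t, ∫ x, g x t ∂μ ∂τ ≤ 0 := by
    refine integral_nonpos_of_ae ?_
    rw [hτ]
    filter_upwards [ae_restrict_mem measurableSet_Ioo] with t ht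
    have ht0 : 0 < t := hm.trans ht.1
    have hset : MeasurableSet {x | t < f x} := measurableSet_lt measurable_const hf
    have e : (fun x => g x t) =
        {x | t < f x}.indicator fun x => t ^ (p - 2) * (f x - c * t) := by
      funext x
      have : t ^ (p - 1) = t ^ (p - 2) * t := by
        rw [← Real.rpow_add_one ht0.ne']; ring_nf
      simp only [hg, hS, indicator, mem_ofPred_eq, this]
      split_ifs <;> ring
    rw [e, integral_indicator hset, integral_const_mul,
      integral_sub hfi.integrableOn (integrable_const _), setIntegral_const, smul_eq_mul]
    refine mul_nonpos_of_nonneg_of_nonpos (Real.rpow_nonneg ht0.le _) ?_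
    have := hlev t ht.1.le
    linarith
  have hψi : Integrable (fun x => min N (f x) ^ p) μ := by
    refine Integrable.of_bound ((measurable_const.min hf).pow_const p).aestronglyMeasurable
      (N ^ p) ?_
    filter_upwards [hmf] with x hx
    have h0 : 0 ≤ min N (f x) := le_min (hm.le.trans hN) (hm.le.trans hx)
    rw [Real.norm_of_nonneg (Real.rpow_nonneg h0 _)]
    exact Real.rpow_le_rpow h0 (min_le_left _ _) (by linarith)
  have hdi : Integrable
      (fun x => (1 / (p - 1) - c / p) * min N (f x) ^ p - m ^ (p - 1) / (p - 1) * f x) μ :=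
    (hψi.const_mul _).sub (hfi.const_mul _)
  have hleft : ∫ x, ((1 / (p - 1) - c / p) * min N (f x) ^ p - m ^ (p - 1) / (p - 1) * f x
      + c * m ^ p / p) ∂μ ≤ ∫ x, ∫ t, g x t ∂τ ∂μ := by
    refine integral_mono_ae
      (hdi.add (integrable_const _))
      hgi.integral_prod_left ?_
    filter_upwards [hmf] with x hx
    set ψ := min N (f x) with hψ
    have hmψ : m ≤ ψ := le_min hN hx
    have hψ0 : 0 < ψ := hm.trans_le hmψ
    have e : ∫ t, g x t ∂τ = ∫ t in m..ψ, (f x * t ^ (p - 2) - c * t ^ (p - 1)) := by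
      have e' : (fun t => g x t) =
          (Iio (f x)).indicator fun t => f x * t ^ (p - 2) - c * t ^ (p - 1) := by
        funext t
        simp only [hg, hS, indicator, mem_ofPred_eq, mem_Iio, one_mul]
      rw [e', integral_indicator measurableSet_Iio, hτ, Measure.restrict_restrict measurableSet_Iio,
        inter_comm, Ioo_inter_Iio, intervalIntegral.integral_of_le hmψ,
        integral_Ioc_eq_integral_Ioo]
    have h0 : (0 : ℝ) ∉ uIcc m ψ := by
      rw [uIcc_of_le hmψ]; exact fun h => absurd h.1 (not_le.2 hm)
    have hii : ∀ r : ℝ, IntervalIntegrable (fun t : ℝ => t ^ r) volume m ψ := fun r =>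
      intervalIntegral.intervalIntegrable_rpow (Or.inr h0)
    have hval : ∫ t in m..ψ, (f x * t ^ (p - 2) - c * t ^ (p - 1))
        = f x * ((ψ ^ (p - 1) - m ^ (p - 1)) / (p - 1)) - c * ((ψ ^ p - m ^ p) / p) := by
      rw [intervalIntegral.integral_sub ((hii _).const_mul _) ((hii _).const_mul _),
        intervalIntegral.integral_const_mul, intervalIntegral.integral_const_mul,
        integral_rpow (Or.inl (by linarith)), integral_rpow (Or.inl (by linarith))]
      ring_nf
    have hψp : ψ ^ p ≤ f x * ψ ^ (p - 1) := by
      have : ψ ^ p = ψ * ψ ^ (p - 1) := by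
        rw [mul_comm, ← Real.rpow_add_one hψ0.ne']; ring_nf
      rw [this]
      exact mul_le_mul_of_nonneg_right (min_le_right _ _) (Real.rpow_nonneg hψ0.le _)
    have hdiv : ψ ^ p / (p - 1) ≤ f x * ψ ^ (p - 1) / (p - 1) :=
      div_le_div_of_nonneg_right hψp (by linarith)
    rw [e, hval]
    calc _ = ψ ^ p / (p - 1) - m ^ (p - 1) / (p - 1) * f x - c * ((ψ ^ p - m ^ p) / p) := by ring
      _ ≤ f x * ψ ^ (p - 1) / (p - 1) - m ^ (p - 1) / (p - 1) * f x
          - c * ((ψ ^ p - m ^ p) / p) := by linarith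
      _ = _ := by ring
  rw [integral_add hdi (integrable_const _),
    integral_sub (hψi.const_mul _) (hfi.const_mul _), integral_const_mul, integral_const_mul,
    integral_const, smul_eq_mul] at hleft
  have htot := hleft.trans (hswap.le.trans hright)
  have hp1 : p - 1 ≠ 0 := by linarith
  have hp0 : p ≠ 0 := by linarith
  have hpp : 0 ≤ p * (p - 1) := mul_nonneg (by linarith) (by linarith)
  have := mul_nonpos_of_nonneg_of_nonpos hpp htot
  have e : ∀ I J K : ℝ, p * (p - 1) * ((1 / (p - 1) - c / p) * I - m ^ (p - 1) / (p - 1) * J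
      + K * (c * m ^ p / p)) = (p - c * (p - 1)) * I - (p * m ^ (p - 1) * J
        - c * (p - 1) * m ^ p * K) := fun I J K => by
    field_simp; ring
  rw [e] at this
  linarith

/-! ### The reverse Hölder inequality -/

/-- The reverse Hölder inequality on one interval, for a measurable function of positive mean whose
`p`-th power is integrable, with the `A₁` condition expressed as an almost everywhere bound. -/
lemma reverse_holder_core {a b c p : ℝ} (hab : a < b) (hc : 1 < c) (hp : 1 < p)
    {f : ℝ → ℝ} (hf : Measurable f) (hfi : IntegrableOn f (Ioo a b))
    (hf0 : ∀ᵐ x ∂volume.restrict (Ioo a b), 0 ≤ f x)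
    (hA : ∀ α β : ℝ, a ≤ α → α < β → β ≤ b →
      ∀ᵐ x ∂volume.restrict (Ioo α β), ∫ t in Ioo α β, f t ≤ c * f x * (β - α))
    (hpi : IntegrableOn (fun x => f x ^ p) (Ioo a b))
    (hpos : 0 < ∫ x in Ioo a b, f x) :
    (p - c * (p - 1)) * ∫ x in Ioo a b, f x ^ p
      ≤ ((∫ x in Ioo a b, f x) / (b - a) / c) ^ (p - 1) * ∫ x in Ioo a b, f x := by
  set J := ∫ x in Ioo a b, f x with hJ
  have hL : 0 < b - a := sub_pos.2 hab
  have hc0 : 0 < c := by linarith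
  set m := J / (b - a) / c with hm_def
  have hm : 0 < m := by positivity
  have hJm : J = m * c * (b - a) := by rw [hm_def]; field_simp
  have hmf : ∀ᵐ x ∂volume.restrict (Ioo a b), m ≤ f x := by
    filter_upwards [hA a b le_rfl hab le_rfl] with x hx
    have : m * (c * (b - a)) ≤ f x * (c * (b - a)) := by
      rw [← hJ, hJm] at hx; linarith
    exact le_of_mul_le_mul_right this (by positivity)
  have hofReal : ∀ s ⊆ Ioo a b,
      ∫⁻ t in s, ENNReal.ofReal (f t) = ENNReal.ofReal (∫ t in s, f t) := fun s hs =>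
    (ofReal_integral_eq_lintegral_ofReal (hfi.mono_set hs)
      (ae_restrict_of_ae_restrict_of_subset hs hf0)).symm
  have hlev : ∀ t, m ≤ t → ∫ x in {x | t < f x}, f x ∂volume.restrict (Ioo a b)
      ≤ c * t * (volume.restrict (Ioo a b)).real {x | t < f x} := by
    intro t ht
    have ht0 : 0 < t := hm.trans_le ht
    have hset : MeasurableSet {x | t < f x} := measurableSet_lt measurable_const hf
    have hEq : {x | ENNReal.ofReal t < ENNReal.ofReal (f x)} = {x | t < f x} := by
      ext x
      exact ENNReal.ofReal_lt_ofReal_iff_of_nonneg ht0.le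
    have h := level_set_estimate (a := a) (b := b) (fun x => ENNReal.ofReal (f x))
      hf.ennreal_ofReal (ENNReal.ofReal c) (ENNReal.ofReal t)
      (ENNReal.mul_ne_top ENNReal.ofReal_ne_top ENNReal.ofReal_ne_top)
      (fun α β h1 h2 h3 => by
        filter_upwards [hA α β h1 h2 h3] with x hx
        rw [hofReal _ (Ioo_subset_Ioo h1 h3), Real.volume_Ioo, ← ENNReal.ofReal_mul hc0.le,
          ← ENNReal.ofReal_mul' (sub_pos.2 h2).le]
        exact ENNReal.ofReal_le_ofReal hx)
      (by
        rw [hofReal _ Subset.rfl, Real.volume_Ioo, ← ENNReal.ofReal_mul hc0.le,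
          ← ENNReal.ofReal_mul' hL.le]
        refine ENNReal.ofReal_le_ofReal ?_
        rw [← hJ, hJm, mul_comm m c]
        gcongr)
    rw [hEq, hofReal _ inter_subset_left, ← ENNReal.ofReal_mul hc0.le] at h
    rw [Measure.restrict_restrict hset, measureReal_restrict_apply hset, inter_comm, Measure.real]
    have hfin : volume (Ioo a b ∩ {x | t < f x}) ≠ ⊤ :=
      measure_ne_top_of_subset inter_subset_left (by simp)
    have h2 := ENNReal.toReal_mono (ENNReal.mul_ne_top ENNReal.ofReal_ne_top hfin) h
    rw [ENNReal.toReal_mul, ENNReal.toReal_ofReal (show 0 ≤ c * t by positivity),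
      ENNReal.toReal_ofReal'] at h2
    exact (le_max_left _ _).trans h2
  have htend : Filter.Tendsto (fun n : ℕ => ∫ x in Ioo a b, min (n : ℝ) (f x) ^ p) Filter.atTop
      (nhds (∫ x in Ioo a b, f x ^ p)) := by
    refine tendsto_integral_of_dominated_convergence (fun x => f x ^ p)
      (fun n => ((measurable_const.min hf).pow_const p).aestronglyMeasurable) hpi
      (fun n => ?_) ?_
    · filter_upwards [hf0] with x hx
      have h0 : 0 ≤ min (n : ℝ) (f x) := le_min (Nat.cast_nonneg n) hx
      rw [Real.norm_of_nonneg (Real.rpow_nonneg h0 _)]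
      exact Real.rpow_le_rpow h0 (min_le_right _ _) (by linarith)
    · refine Filter.Eventually.of_forall fun x => ?_
      refine tendsto_const_nhds.congr' ?_
      filter_upwards [Filter.eventually_ge_atTop ⌈f x⌉₊] with n hn
      rw [min_eq_right ((Nat.le_ceil _).trans (Nat.cast_le.2 hn))]
  refine le_of_tendsto (htend.const_mul _) ?_
  filter_upwards [Filter.eventually_ge_atTop ⌈m⌉₊] with n hn
  have hmain := truncated_moment_le (volume.restrict (Ioo a b)) hf hfi hm
    ((Nat.le_ceil _).trans (Nat.cast_le.2 hn)) hp hmf hlev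
  refine hmain.trans_eq ?_
  have hmp : m ^ p = m ^ (p - 1) * m := by rw [← Real.rpow_add_one hm.ne']; ring_nf
  rw [measureReal_restrict_apply_univ, Real.volume_real_Ioo_of_le hab.le, ← hJ, hmp]
  rw [hJm]; ring

theorem reverse_holder_for_A1_weights (c p : ℝ) (hc : 1 < c)
    (hp1 : 1 ≤ p) (hp2 : p < c / (c - 1))
    (φ : ℝ → ℝ) (hφ0 : ∀ x ∈ Ioo (0:ℝ) 1, 0 ≤ φ x)
    (hφint : IntegrableOn φ (Ioo (0:ℝ) 1))
    (hA1 : ∀ a b : ℝ, 0 ≤ a → a < b → b ≤ 1 →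
      (1/(b-a)) * ∫ x in Ioo a b, φ x ≤ c * essInf φ (volume.restrict (Ioo a b))) :
    ∀ a b : ℝ, 0 ≤ a → a < b → b ≤ 1 →
      (1/(b-a)) * ∫ x in Ioo a b, φ x ^ p
        ≤ (1 / (c ^ (p - 1) * (c + p - p * c))) * ((1/(b-a)) * ∫ x in Ioo a b, φ x) ^ p := by
  intro a b ha hab hb
  have hL : 0 < b - a := sub_pos.2 hab
  have hc0 : 0 < c := by linarith
  have hk : 0 < c + p - p * c := by
    rw [lt_div_iff₀ (by linarith)] at hp2; linarith
  have hsub : Ioo a b ⊆ Ioo 0 1 := Ioo_subset_Ioo ha hb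
  have hφi : IntegrableOn φ (Ioo a b) := hφint.mono_set hsub
  have hJ0 : 0 ≤ ∫ x in Ioo a b, φ x :=
    setIntegral_nonneg measurableSet_Ioo fun x hx => hφ0 x (hsub hx)
  have hRHS : 0 ≤ (1 / (c ^ (p - 1) * (c + p - p * c))) *
      ((1/(b-a)) * ∫ x in Ioo a b, φ x) ^ p := by positivity
  rcases hp1.eq_or_lt with rfl | hp
  · simp
  rcases hJ0.eq_or_lt with hJ | hJ
  · have h0 : φ =ᵐ[volume.restrict (Ioo a b)] 0 :=
      (setIntegral_eq_zero_iff_of_nonneg_ae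
        ((ae_restrict_mem measurableSet_Ioo).mono fun x hx => hφ0 x (hsub hx)) hφi).1 hJ.symm
    have : ∫ x in Ioo a b, φ x ^ p = 0 := by
      refine integral_eq_zero_of_ae ?_
      filter_upwards [h0] with x hx
      rw [hx, Pi.zero_apply, Real.zero_rpow (by linarith)]
    rw [this, mul_zero]
    exact hRHS
  -- If `φ ^ p` is not integrable, its Bochner integral is the junk value `0`.
  by_cases hpi : IntegrableOn (fun x => φ x ^ p) (Ioo a b)
  swap
  · rw [integral_undef hpi, mul_zero]
    exact hRHS
  -- Replace `φ`, which is only almost everywhere measurable, by a measurable representative.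
  set f := hφint.aestronglyMeasurable.mk φ with hf_def
  have hfm : Measurable f := hφint.aestronglyMeasurable.stronglyMeasurable_mk.measurable
  have hfφ : φ =ᵐ[volume.restrict (Ioo 0 1)] f := hφint.aestronglyMeasurable.ae_eq_mk
  have hfφ' : ∀ α β : ℝ, a ≤ α → β ≤ b → φ =ᵐ[volume.restrict (Ioo α β)] f := fun α β h1 h2 =>
    ae_restrict_of_ae_restrict_of_subset (Ioo_subset_Ioo (ha.trans h1) (h2.trans hb)) hfφ
  have hab' := hfφ' a b le_rfl le_rfl
  have hpow : (fun x => φ x ^ p) =ᵐ[volume.restrict (Ioo a b)] fun x => f x ^ p := by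
    filter_upwards [hab'] with x hx
    rw [hx]
  have hA : ∀ α β : ℝ, a ≤ α → α < β → β ≤ b →
      ∀ᵐ x ∂volume.restrict (Ioo α β), ∫ t in Ioo α β, f t ≤ c * f x * (β - α) := by
    intro α β h1 h2 h3
    have hbdd : Filter.IsBoundedUnder (· ≥ ·) (ae (volume.restrict (Ioo α β))) φ :=
      ⟨0, Filter.eventually_map.2 ((ae_restrict_mem measurableSet_Ioo).mono fun x hx =>
        hφ0 x (Ioo_subset_Ioo (ha.trans h1) (h3.trans hb) hx))⟩
    filter_upwards [ae_essInf_le hbdd, hfφ' α β h1 h3] with x hx hx'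
    have h := hA1 α β (ha.trans h1) h2 (h3.trans hb)
    rw [← integral_congr_ae (hfφ' α β h1 h3), ← hx']
    have hβα : 0 < β - α := sub_pos.2 h2
    have h' := h.trans (mul_le_mul_of_nonneg_left hx hc0.le)
    rw [one_div, inv_mul_le_iff₀ hβα] at h'
    linarith
  have hcore := reverse_holder_core hab hc hp hfm (hφi.congr hab')
    (by
      filter_upwards [hab', ae_restrict_mem measurableSet_Ioo] with x hx hx'
      rw [← hx]; exact hφ0 x (hsub hx'))
    hA (hpi.congr hpow) (by rwa [← integral_congr_ae hab'])
  rw [← integral_congr_ae hab', ← integral_congr_ae hpow] at hcore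
  set J := ∫ x in Ioo a b, φ x
  set X := ∫ x in Ioo a b, φ x ^ p
  have hM : 0 < J / (b - a) := by positivity
  have hAp : (J / (b - a)) ^ p = (J / (b - a)) ^ (p - 1) * (J / (b - a)) := by
    rw [← Real.rpow_add_one hM.ne']; ring_nf
  rw [Real.div_rpow hM.le hc0.le] at hcore
  have hcp : 0 < c ^ (p - 1) := Real.rpow_pos_of_pos hc0 _
  rw [one_div_mul_eq_div, one_div_mul_eq_div, one_div_mul_eq_div, hAp,
    div_le_div_iff₀ hL (by positivity)]
  have h2 : (p - c * (p - 1)) * X * c ^ (p - 1) ≤ (J / (b - a)) ^ (p - 1) * J := by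
    calc _ ≤ (J / (b - a)) ^ (p - 1) / c ^ (p - 1) * J * c ^ (p - 1) := by gcongr
      _ = _ := by field_simp
  calc X * (c ^ (p - 1) * (c + p - p * c)) = (p - c * (p - 1)) * X * c ^ (p - 1) := by ring
    _ ≤ _ := h2
    _ = _ := by field_simp
end

section
/- If φ ∈ A₁((0,1)) with constant c > 1, then φ ∈ L^p((0,1)) for every p with 1 ≤ p < c/(c−1). -/
/-!
The proof is the classical one for one-dimensional `A₁` weights with the sharp constant.

*Level sets.* If `{φ ≤ t}` has positive measure in `(0,1)`, then `∫_{φ > t} φ ≤ c t |{φ > t}|`.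
To see this, approximate `{φ ≤ t}` from inside by a compact set `C` and let `S` be the support of
Lebesgue measure on `C`. The components of the open set `(0,1) \ S` are intervals with an endpoint
in `S`, so every slight enlargement of such a component meets `{φ ≤ t}` in positive measure, and
the `A₁` condition on the enlargement gives `∫_I φ ≤ c t |I|` in the limit
(`measure_component_le`). Summing over the components (`measure_open_le`) and letting `C` exhaust
`{φ ≤ t}` gives the claim (`measure_diff_le`).

*Integration over the levels.* Let `h = min φ N` and let `L > 0` be a level above which the first
step applies. The layer cake formula for `∫ h ^ (p - 1) φ` and the level set bound give
`∫ h ^ p ≤ ∫ h ^ (p - 1) φ ≤ (p - 1) c / p * ∫ h ^ p + L ^ (p - 1) ∫ φ`.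
As `(p - 1) c / p < 1` exactly when `p < c / (c - 1)`, and `∫ h ^ p` is finite, this bounds
`∫ h ^ p` uniformly in `N` (`lintegral_min_rpow_le`), and monotone convergence concludes.
-/

open MeasureTheory Set
open scoped ENNReal Topology

/-! ### Components of open subsets of the unit interval -/

/-- A linear bound for a measure on the connected components of an open set `W` (the intervals in
`W` with both endpoints outside `W`) passes to `W`. -/
lemma measure_open_le (ν : Measure ℝ) (K : ℝ≥0∞) (W : Set ℝ) (hW : IsOpen W)
    (hW1 : W ⊆ Ioo (0:ℝ) 1)
    (H : ∀ a b : ℝ, a < b → Ioo a b ⊆ W → a ∉ W → b ∉ W → ν (Ioo a b) ≤ K * volume (Ioo a b)) :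
    ν W ≤ K * volume W := by
  have comp : ∀ x ∈ W, ν (connectedComponentIn W x) ≤ K * volume (connectedComponentIn W x) := by
    intro x hx
    set C := connectedComponentIn W x with hC
    have hCo : IsOpen C := hW.connectedComponentIn
    have hCp : IsPreconnected C := isPreconnected_connectedComponentIn
    have hCW : C ⊆ W := connectedComponentIn_subset W x
    have hxC : x ∈ C := mem_connectedComponentIn hx
    have hbb : BddBelow C := bddBelow_Ioo.mono (hCW.trans hW1)
    have hba : BddAbove C := bddAbove_Ioo.mono (hCW.trans hW1)
    have hCeq : C = Ioo (sInf C) (sSup C) := by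
      apply Subset.antisymm
      · intro y hy
        obtain ⟨ε, hε, hball⟩ := Metric.isOpen_iff.1 hCo y hy
        have h1 : y - ε / 2 ∈ C := hball (by
          rw [Metric.mem_ball, Real.dist_eq, abs_lt]; constructor <;> linarith)
        have h2 : y + ε / 2 ∈ C := hball (by
          rw [Metric.mem_ball, Real.dist_eq, abs_lt]; constructor <;> linarith)
        have := csInf_le hbb h1
        have := le_csSup hba h2
        constructor <;> linarith
      · exact IsConnected.Ioo_csInf_csSup_subset ⟨⟨x, hxC⟩, hCp⟩ hbb hba
    generalize sInf C = a at hCeq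
    generalize sSup C = b at hCeq
    have hxab : x ∈ Ioo a b := hCeq ▸ hxC
    have hsub : Ioo a b ⊆ W := hCeq ▸ hCW
    have ha : a ∉ W := by
      intro haW
      have h1 : Ico a b ⊆ C := by
        apply isPreconnected_Ico.subset_connectedComponentIn ⟨hxab.1.le, hxab.2⟩
        intro y hy
        rcases hy.1.eq_or_lt with h | h
        · exact h ▸ haW
        · exact hsub ⟨h, hy.2⟩
      have h2 : a ∈ C := h1 ⟨le_rfl, hxab.1.trans hxab.2⟩
      rw [hCeq] at h2
      exact lt_irrefl _ h2.1
    have hb : b ∉ W := by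
      intro hbW
      have h1 : Ioc a b ⊆ C := by
        apply isPreconnected_Ioc.subset_connectedComponentIn ⟨hxab.1, hxab.2.le⟩
        intro y hy
        rcases hy.2.eq_or_lt with h | h
        · exact h ▸ hbW
        · exact hsub ⟨hy.1, h⟩
      have h2 : b ∈ C := h1 ⟨hxab.1.trans hxab.2, le_rfl⟩
      rw [hCeq] at h2
      exact lt_irrefl _ h2.2
    rw [hCeq]
    exact H a b (hxab.1.trans hxab.2) hsub ha hb
  set F : Set (Set ℝ) := (fun x => connectedComponentIn W x) '' W with hF
  have hdisj : F.PairwiseDisjoint id := by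
    rintro _ ⟨x, hx, rfl⟩ _ ⟨y, hy, rfl⟩ hne
    by_contra hnd
    obtain ⟨z, hz1, hz2⟩ := Set.not_disjoint_iff.1 hnd
    exact hne ((connectedComponentIn_eq hz1).trans (connectedComponentIn_eq hz2).symm)
  have hopen : ∀ s ∈ F, IsOpen s := by
    rintro _ ⟨x, hx, rfl⟩
    exact hW.connectedComponentIn
  have hcount : F.Countable := by
    refine hdisj.countable_of_isOpen hopen ?_
    rintro _ ⟨x, hx, rfl⟩
    exact ⟨x, mem_connectedComponentIn hx⟩
  have hUn : W = ⋃₀ F := by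
    apply Subset.antisymm
    · intro x hx
      exact ⟨_, ⟨x, hx, rfl⟩, mem_connectedComponentIn hx⟩
    · rintro y ⟨_, ⟨x, hx, rfl⟩, hy⟩
      exact connectedComponentIn_subset W x hy
  rw [hUn, measure_sUnion hcount hdisj fun s hs => (hopen s hs).measurableSet,
    measure_sUnion hcount hdisj fun s hs => (hopen s hs).measurableSet, ← ENNReal.tsum_mul_left]
  refine ENNReal.tsum_le_tsum ?_
  rintro ⟨_, ⟨x, hx, rfl⟩⟩
  exact comp x hx

/-! ### The level set inequality -/

/-- The bound on a component `(a, b)` of the complement of the support of `volume.restrict C`: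
one endpoint lies in that support, so all larger intervals meet `A` in positive measure, and the
bound for them survives the limit. -/
lemma measure_component_le (ν : Measure ℝ) (K : ℝ≥0∞) (hK : K ≠ ⊤) (A C : Set ℝ)
    (H : ∀ a b : ℝ, 0 ≤ a → a < b → b ≤ 1 → volume (Ioo a b ∩ A) ≠ 0 →
      ν (Ioo a b) ≤ K * volume (Ioo a b))
    (hC : IsClosed C) (hCA : C ⊆ Ioo (0:ℝ) 1 ∩ A) (hC0 : volume C ≠ 0)
    (a b : ℝ) (hab : a < b)
    (hsub : Ioo a b ⊆ Ioo (0:ℝ) 1 \ (volume.restrict C).support)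
    (ha : a ∉ Ioo (0:ℝ) 1 \ (volume.restrict C).support)
    (hb : b ∉ Ioo (0:ℝ) 1 \ (volume.restrict C).support) :
    ν (Ioo a b) ≤ K * volume (Ioo a b) := by
  set S := (volume.restrict C).support with hS
  have hSC : S ⊆ C :=
    Measure.support_subset_of_isClosed hC (ae_restrict_mem hC.measurableSet)
  have hSne : S.Nonempty := by
    apply Measure.nonempty_support
    rwa [Ne, Measure.restrict_eq_zero]
  have hcl : Icc a b ⊆ Icc (0:ℝ) 1 := by
    rw [← closure_Ioo hab.ne, ← closure_Ioo (zero_ne_one' ℝ)]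
    exact closure_mono (hsub.trans sdiff_subset)
  have ha0 : 0 ≤ a := (hcl (left_mem_Icc.2 hab.le)).1
  have hb1 : b ≤ 1 := (hcl (right_mem_Icc.2 hab.le)).2
  have hend : ∃ s ∈ S, s = a ∨ s = b := by
    by_contra! hcon
    have ha' : a = 0 := by
      by_contra hne
      exact ha ⟨⟨lt_of_le_of_ne ha0 (Ne.symm hne), hab.trans_le hb1⟩, fun h => (hcon a h).1 rfl⟩
    have hb' : b = 1 := by
      by_contra hne
      exact hb ⟨⟨ha0.trans_lt hab, lt_of_le_of_ne hb1 hne⟩, fun h => (hcon b h).2 rfl⟩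
    subst ha' hb'
    obtain ⟨s, hs⟩ := hSne
    exact (hsub (hCA (hSC hs)).1).2 hs
  obtain ⟨s, hsS, hs⟩ := hend
  have hs01 : s ∈ Ioo (0:ℝ) 1 := (hCA (hSC hsS)).1
  have key : ∀ δ > 0, ν (Ioo a b) ≤ K * ENNReal.ofReal (b - a + 2 * δ) := by
    intro δ hδ
    have hsI : s ∈ Ioo (max 0 (a - δ)) (min 1 (b + δ)) := by
      refine ⟨max_lt hs01.1 ?_, lt_min hs01.2 ?_⟩ <;> rcases hs with h | h <;> linarith
    have hpos := (Measure.mem_support_iff_forall s).1 hsS _ (Ioo_mem_nhds hsI.1 hsI.2)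
    rw [Measure.restrict_apply measurableSet_Ioo] at hpos
    have h1 := H _ _ (le_max_left _ _) (hsI.1.trans hsI.2) (min_le_left _ _)
      (hpos.trans_le (measure_mono
        (inter_subset_inter_right _ (hCA.trans inter_subset_right)))).ne'
    calc ν (Ioo a b) ≤ ν (Ioo (max 0 (a - δ)) (min 1 (b + δ))) := by
          apply measure_mono
          apply Ioo_subset_Ioo
          · exact max_le ha0 (by linarith)
          · exact le_min hb1 (by linarith)
      _ ≤ _ := h1
      _ ≤ _ := by
          rw [Real.volume_Ioo]
          gcongr
          have := le_max_right 0 (a - δ)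
          have := min_le_right 1 (b + δ)
          linarith
  have hlim : Filter.Tendsto (fun δ : ℝ => K * ENNReal.ofReal (b - a + 2 * δ)) (𝓝[>] 0)
      (𝓝 (K * ENNReal.ofReal (b - a + 2 * 0))) := by
    apply ENNReal.Tendsto.const_mul _ (Or.inr hK)
    apply ENNReal.tendsto_ofReal
    exact ((by fun_prop : Continuous fun δ : ℝ => b - a + 2 * δ).tendsto 0).mono_left
      nhdsWithin_le_nhds
  have := ge_of_tendsto hlim (by
    filter_upwards [self_mem_nhdsWithin] with δ hδ using key δ hδ)
  rw [Real.volume_Ioo]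
  simpa using this

/-- If a measure `ν` satisfies `ν I ≤ K |I|` on all intervals `I` meeting `A` in positive measure,
then it satisfies the same bound on the complement of `A`. -/
lemma measure_diff_le (ν : Measure ℝ) (K : ℝ≥0∞) (hK : K ≠ ⊤) (A : Set ℝ)
    (hA : MeasurableSet A)
    (H : ∀ a b : ℝ, 0 ≤ a → a < b → b ≤ 1 → volume (Ioo a b ∩ A) ≠ 0 →
      ν (Ioo a b) ≤ K * volume (Ioo a b))
    (hA0 : volume (Ioo (0:ℝ) 1 ∩ A) ≠ 0) :
    ν (Ioo (0:ℝ) 1 \ A) ≤ K * volume (Ioo (0:ℝ) 1 \ A) := by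
  set B := Ioo (0:ℝ) 1 ∩ A with hB
  have hBm : MeasurableSet B := measurableSet_Ioo.inter hA
  have hBtop : volume B ≠ ⊤ :=
    ((measure_mono inter_subset_left).trans_lt measure_Ioo_lt_top).ne
  have hdiff : volume (Ioo (0:ℝ) 1 \ A) = 1 - volume B := by
    rw [← sdiff_inter_self_eq_sdiff, inter_comm, measure_sdiff inter_subset_left
      hBm.nullMeasurableSet hBtop, Real.volume_Ioo]
    simp [hB]
  have key : ∀ r < volume B, ν (Ioo (0:ℝ) 1 \ A) ≤ K * (1 - r) := by
    intro r hr
    obtain ⟨C, hCB, hC, hrC⟩ := hBm.exists_lt_isCompact hr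
    set S := (volume.restrict C).support with hS
    have hSC : S ⊆ C :=
      Measure.support_subset_of_isClosed hC.isClosed (ae_restrict_mem hC.measurableSet)
    have hSm : MeasurableSet S := Measure.isClosed_support.measurableSet
    have hvol : volume C ≤ volume S := by
      have h1 : volume.restrict C Sᶜ = 0 := Measure.measure_compl_support
      rw [Measure.restrict_apply hSm.compl] at h1
      calc volume C ≤ volume (S ∪ Sᶜ ∩ C) := measure_mono fun x hx => by
            by_cases h : x ∈ S
            · exact Or.inl h
            · exact Or.inr ⟨h, hx⟩
        _ ≤ volume S + volume (Sᶜ ∩ C) := measure_union_le _ _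
        _ = volume S := by rw [h1, add_zero]
    have hW : IsOpen (Ioo (0:ℝ) 1 \ S) := isOpen_Ioo.sdiff Measure.isClosed_support
    have hνW := measure_open_le ν K _ hW sdiff_subset fun a b hab hsub ha hb =>
      measure_component_le ν K hK A C H hC.isClosed hCB (bot_le.trans_lt hrC).ne' a b hab hsub ha hb
    calc ν (Ioo (0:ℝ) 1 \ A) ≤ ν (Ioo (0:ℝ) 1 \ S) :=
          measure_mono (sdiff_subset_sdiff_right (hSC.trans (hCB.trans inter_subset_right)))
      _ ≤ _ := hνW
      _ ≤ K * (1 - r) := by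
          gcongr
          rw [measure_sdiff ((hSC.trans hCB).trans inter_subset_left) hSm.nullMeasurableSet
            (((measure_mono (hSC.trans hCB)).trans_lt hBtop.lt_top).ne), Real.volume_Ioo]
          simp only [sub_zero, ENNReal.ofReal_one]
          exact tsub_le_tsub_left (hrC.le.trans hvol) 1
  rw [hdiff]
  by_contra! hcon
  have hlim : Filter.Tendsto (fun r : ℝ≥0∞ => K * (1 - r)) (𝓝[<] (volume B))
      (𝓝 (K * (1 - volume B))) := by
    apply ENNReal.Tendsto.const_mul _ (Or.inr hK)
    exact ((ENNReal.continuous_sub_left ENNReal.one_ne_top).tendsto _).mono_left nhdsWithin_le_nhds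
  have : (𝓝[<] (volume B)).NeBot := nhdsLT_neBot_of_exists_lt ⟨0, pos_iff_ne_zero.2 hA0⟩
  obtain ⟨r, hr1, hr2⟩ := ((hlim.eventually_lt_const hcon).and self_mem_nhdsWithin).exists
  exact absurd (key r hr2) (not_le.2 hr1)

/-! ### From level sets to higher integrability -/

/-- The a priori bound for the truncations of `f`, uniform in the truncation level `N`. -/
lemma lintegral_min_rpow_le {α : Type*} [MeasurableSpace α] (μ : Measure α) [IsFiniteMeasure μ]
    (f : α → ℝ) (hf : Measurable f) (h0 : ∀ x, 0 ≤ f x) (c L : ℝ) (hc : 1 < c) (hL : 0 < L)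
    (H : ∀ t ≥ L, ∫⁻ x in {x | t < f x}, ENNReal.ofReal (f x) ∂μ
      ≤ ENNReal.ofReal (c * t) * μ {x | t < f x})
    (p : ℝ) (hp1 : 1 < p) (N : ℝ) (hN : 0 ≤ N) :
    ENNReal.ofReal (1 - (p - 1) * c / p) * ∫⁻ x, ENNReal.ofReal ((min (f x) N) ^ p) ∂μ
      ≤ ENNReal.ofReal (L ^ (p - 1)) * ∫⁻ x, ENNReal.ofReal (f x) ∂μ := by
  set h : α → ℝ := fun x => min (f x) N with hh
  have hhm : Measurable h := hf.min measurable_const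
  have hh0 : ∀ x, 0 ≤ h x := fun x => le_min (h0 x) hN
  set ν := μ.withDensity (fun x => ENNReal.ofReal (f x)) with hν
  have hfm : Measurable fun x => ENNReal.ofReal (f x) := hf.ennreal_ofReal
  have hνu : ν univ = ∫⁻ x, ENNReal.ofReal (f x) ∂μ := by
    rw [hν, withDensity_apply _ MeasurableSet.univ, Measure.restrict_univ]
  set X := ∫⁻ x, ENNReal.ofReal (h x ^ p) ∂μ with hX
  set J := ∫⁻ t in Ioi (0:ℝ), μ {a | t < h a} * ENNReal.ofReal (t ^ (p - 1)) with hJ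
  have hXJ : X = ENNReal.ofReal p * J :=
    lintegral_rpow_eq_lintegral_meas_lt_mul μ (Filter.Eventually.of_forall hh0)
      hhm.aemeasurable (by linarith)
  have hXtop : X ≠ ⊤ := by
    have : X ≤ ∫⁻ _, ENNReal.ofReal (N ^ p) ∂μ := by
      apply lintegral_mono
      intro x
      apply ENNReal.ofReal_le_ofReal
      exact Real.rpow_le_rpow (hh0 x) (min_le_right _ _) (by linarith)
    rw [lintegral_const] at this
    exact (this.trans_lt (ENNReal.mul_lt_top ENNReal.ofReal_lt_top (measure_lt_top _ _))).ne
  -- the level sets of `h` are those of `f` below `N` and empty from `N` on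
  have hlev : ∀ t : ℝ, 0 < t →
      ν {a | t < h a} ≤ ENNReal.ofReal (c * t) * μ {a | t < h a}
        + (Ioo 0 L).indicator (fun _ => ν univ) t := by
    intro t ht
    by_cases htL : t < L
    · rw [indicator_of_mem (show t ∈ Ioo 0 L from ⟨ht, htL⟩)]
      exact (measure_mono (subset_univ _)).trans le_add_self
    · refine le_trans ?_ le_self_add
      by_cases htN : t < N
      · have : {a | t < h a} = {a | t < f a} := by
          ext a; simp [hh, htN]
        rw [this, hν, withDensity_apply _ (measurableSet_lt measurable_const hf)]
        exact H t (not_lt.1 htL)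
      · have : {a | t < h a} = ∅ := by
          ext a; simp [hh, htN]
        simp [this]
  have h1 : X ≤ ∫⁻ x, ENNReal.ofReal (h x ^ (p - 1)) ∂ν := by
    rw [hν, lintegral_withDensity_eq_lintegral_mul _ hfm (by fun_prop)]
    apply lintegral_mono
    intro x
    simp only [Pi.mul_apply]
    rw [← ENNReal.ofReal_mul (h0 x)]
    apply ENNReal.ofReal_le_ofReal
    have h2 : h x ^ p = h x * h x ^ (p - 1) := by
      rcases (hh0 x).eq_or_lt with he | hpos
      · rw [← he, Real.zero_rpow (by linarith), zero_mul]
      · rw [Real.rpow_sub_one hpos.ne']; field_simp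
    rw [h2]
    exact mul_le_mul_of_nonneg_right (min_le_left _ _) (Real.rpow_nonneg (hh0 x) _)
  have h2 : ∫⁻ x, ENNReal.ofReal (h x ^ (p - 1)) ∂ν
      = ENNReal.ofReal (p - 1) *
        ∫⁻ t in Ioi (0:ℝ), ν {a | t < h a} * ENNReal.ofReal (t ^ (p - 1 - 1)) :=
    lintegral_rpow_eq_lintegral_meas_lt_mul ν (Filter.Eventually.of_forall hh0)
      hhm.aemeasurable (by linarith)
  have hint : ∫⁻ t in Ioo (0:ℝ) L, ENNReal.ofReal (t ^ (p - 1 - 1))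
      = ENNReal.ofReal (L ^ (p - 1) / (p - 1)) := by
    have hI : IntervalIntegrable (fun t : ℝ => t ^ (p - 1 - 1)) volume 0 L :=
      intervalIntegral.intervalIntegrable_rpow' (by linarith)
    rw [restrict_Ioo_eq_restrict_Ioc, ← ofReal_integral_eq_lintegral_ofReal,
      ← intervalIntegral.integral_of_le hL.le, integral_rpow (Or.inl (by linarith))]
    · congr 1
      rw [Real.zero_rpow (by linarith)]
      simp
    · exact (intervalIntegrable_iff_integrableOn_Ioc_of_le hL.le).1 hI
    · filter_upwards [ae_restrict_mem measurableSet_Ioc] with t ht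
        using Real.rpow_nonneg ht.1.le _
  have h3 : ∫⁻ t in Ioi (0:ℝ), ν {a | t < h a} * ENNReal.ofReal (t ^ (p - 1 - 1))
      ≤ ENNReal.ofReal c * J + ν univ * ENNReal.ofReal (L ^ (p - 1) / (p - 1)) := by
    calc _ ≤ ∫⁻ t in Ioi (0:ℝ), (ENNReal.ofReal c * (μ {a | t < h a} * ENNReal.ofReal (t ^ (p - 1)))
          + (Ioo 0 L).indicator (fun t => ν univ * ENNReal.ofReal (t ^ (p - 1 - 1))) t) := by
          apply setLIntegral_mono' measurableSet_Ioi
          intro t ht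
          have ht' : (0:ℝ) < t := ht
          calc _ ≤ (ENNReal.ofReal (c * t) * μ {a | t < h a}
                + (Ioo 0 L).indicator (fun _ => ν univ) t) * ENNReal.ofReal (t ^ (p - 1 - 1)) := by
                gcongr
                exact hlev t ht'
            _ = _ := by
                rw [add_mul]
                congr 1
                · have : t ^ (p - 1) = t * t ^ (p - 1 - 1) := by
                    rw [Real.rpow_sub_one ht'.ne' (p - 1)]; field_simp
                  rw [this, ENNReal.ofReal_mul (by linarith), ENNReal.ofReal_mul ht'.le]
                  ring
                · by_cases hm : t ∈ Ioo 0 L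
                  · simp only [indicator_of_mem hm]
                  · simp only [indicator_of_notMem hm, zero_mul]
      _ = _ := by
          rw [lintegral_add_right _ (by
            apply Measurable.indicator _ measurableSet_Ioo
            fun_prop), lintegral_const_mul' _ _ ENNReal.ofReal_ne_top,
            lintegral_indicator measurableSet_Ioo, Measure.restrict_restrict measurableSet_Ioo,
            inter_eq_left.2 (Ioo_subset_Ioi_self : Ioo 0 L ⊆ Ioi (0:ℝ)),
            lintegral_const_mul _ (by fun_prop), hint]
  have hp0 : 0 < p := by linarith
  have hJX : J = ENNReal.ofReal (1 / p) * X := by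
    rw [hXJ, ← mul_assoc, ← ENNReal.ofReal_mul (by positivity), one_div_mul_cancel hp0.ne']
    simp
  have hfin : X ≤ ENNReal.ofReal ((p - 1) * c / p) * X
      + ENNReal.ofReal (L ^ (p - 1)) * ν univ := by
    calc X ≤ ENNReal.ofReal (p - 1) *
          (ENNReal.ofReal c * J + ν univ * ENNReal.ofReal (L ^ (p - 1) / (p - 1))) :=
          h1.trans (h2.le.trans (by gcongr))
      _ = _ := by
          rw [hJX, mul_add]
          congr 1
          · rw [← mul_assoc, ← mul_assoc, ← ENNReal.ofReal_mul (by linarith),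
              ← ENNReal.ofReal_mul (by nlinarith)]
            congr 2
            ring
          · rw [mul_comm (ν univ), ← mul_assoc, ← ENNReal.ofReal_mul (by linarith)]
            congr 2
            have : p - 1 ≠ 0 := by linarith
            field_simp
  rw [← hνu, ENNReal.ofReal_sub _ (by
    have : 0 < p - 1 := by linarith
    positivity), ENNReal.ofReal_one, ENNReal.sub_mul fun _ _ => hXtop, one_mul]
  exact tsub_le_iff_left.2 hfin

/-- A level set inequality with constant `c` above the level `L` gives integrability of `f ^ p`
in the sharp range `p < c / (c - 1)`. -/
lemma integrable_rpow_of_level {α : Type*} [MeasurableSpace α] (μ : Measure α) [IsFiniteMeasure μ]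
    (f : α → ℝ) (hf : Measurable f) (h0 : ∀ x, 0 ≤ f x) (hfi : Integrable f μ)
    (c L : ℝ) (hc : 1 < c) (hL : 0 < L)
    (H : ∀ t ≥ L, ∫⁻ x in {x | t < f x}, ENNReal.ofReal (f x) ∂μ
      ≤ ENNReal.ofReal (c * t) * μ {x | t < f x})
    (p : ℝ) (hp1 : 1 < p) (hp : p < c / (c - 1)) :
    Integrable (fun x => f x ^ p) μ := by
  have hp0 : 0 < p := by linarith
  set k := ENNReal.ofReal (1 - (p - 1) * c / p) with hk
  set M := ENNReal.ofReal (L ^ (p - 1)) * ∫⁻ x, ENNReal.ofReal (f x) ∂μ with hM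
  have hkpos : k ≠ 0 := by
    rw [hk, Ne, ENNReal.ofReal_eq_zero, not_le, sub_pos, div_lt_one hp0]
    rw [lt_div_iff₀ (by linarith)] at hp
    linarith
  have hMtop : M ≠ ⊤ := by
    apply ENNReal.mul_ne_top ENNReal.ofReal_ne_top
    rw [← ofReal_integral_eq_lintegral_ofReal hfi (Filter.Eventually.of_forall h0)]
    exact ENNReal.ofReal_ne_top
  have hbd : ∀ n : ℕ, ∫⁻ x, ENNReal.ofReal ((min (f x) n) ^ p) ∂μ ≤ M / k := by
    intro n
    rw [ENNReal.le_div_iff_mul_le (Or.inl hkpos) (Or.inl ENNReal.ofReal_ne_top), mul_comm]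
    exact lintegral_min_rpow_le μ f hf h0 c L hc hL H p hp1 n (Nat.cast_nonneg n)
  have hlim : ∫⁻ x, ENNReal.ofReal (f x ^ p) ∂μ ≤ M / k := by
    have ht := lintegral_tendsto_of_tendsto_of_monotone (μ := μ)
      (f := fun (n : ℕ) x => ENNReal.ofReal ((min (f x) n) ^ p))
      (F := fun x => ENNReal.ofReal (f x ^ p)) (fun n => by fun_prop)
      (Filter.Eventually.of_forall fun x m n hmn => by
        apply ENNReal.ofReal_le_ofReal
        apply Real.rpow_le_rpow (le_min (h0 x) (Nat.cast_nonneg m)) _ hp0.le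
        exact min_le_min_left _ (by exact_mod_cast hmn))
      (Filter.Eventually.of_forall fun x => by
        apply tendsto_const_nhds.congr'
        obtain ⟨n, hn⟩ := exists_nat_ge (f x)
        filter_upwards [Filter.eventually_ge_atTop n] with m hm
        rw [min_eq_left (hn.trans (by exact_mod_cast hm))])
    exact le_of_tendsto' ht hbd
  refine ⟨(hf.pow_const p).aestronglyMeasurable, ?_⟩
  rw [hasFiniteIntegral_iff_ofReal (Filter.Eventually.of_forall fun x => Real.rpow_nonneg (h0 x) _)]
  exact hlim.trans_lt (ENNReal.div_lt_top hMtop hkpos)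

theorem Lp_integrability_of_A1_weights (c : ℝ) (hc : 1 < c)
    (φ : ℝ → ℝ) (hφ0 : ∀ x ∈ Ioo (0:ℝ) 1, 0 ≤ φ x)
    (hφint : IntegrableOn φ (Ioo (0:ℝ) 1))
    (hA1 : ∀ a b : ℝ, 0 ≤ a → a < b → b ≤ 1 →
      (1/(b-a)) * ∫ x in Ioo a b, φ x ≤ c * essInf φ (volume.restrict (Ioo a b))) :
    ∀ p : ℝ, 1 ≤ p → p < c / (c - 1) →
      IntegrableOn (fun x => φ x ^ p) (Ioo (0:ℝ) 1) := by
  intro p hp1 hp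
  rcases hp1.eq_or_lt with rfl | hp1
  · simpa using hφint
  -- a measurable representative, nonnegative everywhere
  obtain ⟨g, hgm, hg0, hge⟩ : ∃ g : ℝ → ℝ, Measurable g ∧ (∀ x, 0 ≤ g x) ∧
      φ =ᵐ[volume.restrict (Ioo (0:ℝ) 1)] g := by
    have hae := hφint.1.aemeasurable
    refine ⟨fun x => max (hae.mk φ x) 0, hae.measurable_mk.max measurable_const,
      fun x => le_max_right _ _, ?_⟩
    filter_upwards [hae.ae_eq_mk, ae_restrict_mem measurableSet_Ioo] with x hx hx1
    rw [← hx, max_eq_left (hφ0 x hx1)]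
  have hgi : IntegrableOn g (Ioo (0:ℝ) 1) := Integrable.congr hφint hge
  set ν := volume.withDensity (fun x => ENNReal.ofReal (g x)) with hν
  have hint : ∀ t : ℝ, 0 ≤ t → ∀ a b : ℝ, 0 ≤ a → a < b → b ≤ 1 →
      volume (Ioo a b ∩ {x | g x ≤ t}) ≠ 0 →
      ν (Ioo a b) ≤ ENNReal.ofReal (c * t) * volume (Ioo a b) := by
    intro t ht a b ha hab hb hpos
    have hsub : Ioo a b ⊆ Ioo (0:ℝ) 1 := Ioo_subset_Ioo ha hb
    have hge' : φ =ᵐ[volume.restrict (Ioo a b)] g := ae_restrict_of_ae_restrict_of_subset hsub hge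
    have hess : essInf φ (volume.restrict (Ioo a b)) ≤ t := by
      rw [essInf, Filter.liminf_eq]
      apply csSup_le
      · refine ⟨0, ?_⟩
        filter_upwards [ae_restrict_mem measurableSet_Ioo] with x hx using hφ0 x (hsub hx)
      · intro s hs
        by_contra! hts
        have hs' : ∀ᵐ x ∂(volume.restrict (Ioo a b)), s ≤ φ x := hs
        apply hpos
        have : ∀ᵐ x ∂(volume.restrict (Ioo a b)), x ∉ {x | g x ≤ t} := by
          filter_upwards [hs', hge'] with x h1 h2
          rw [h2] at h1
          exact not_le.2 (hts.trans_le h1)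
        have h3 := measure_eq_zero_iff_ae_notMem.2 this
        rwa [Measure.restrict_apply (measurableSet_le hgm measurable_const), inter_comm] at h3
    have h1 := (hA1 a b ha hab hb).trans (mul_le_mul_of_nonneg_left hess (by linarith))
    rw [one_div, inv_mul_le_iff₀ (sub_pos.2 hab), integral_congr_ae hge'] at h1
    rw [hν, withDensity_apply _ measurableSet_Ioo, ← ofReal_integral_eq_lintegral_ofReal
      (hgi.mono_set hsub) (Filter.Eventually.of_forall hg0), Real.volume_Ioo,
      ← ENNReal.ofReal_mul (mul_nonneg (by linarith) ht), mul_comm (c * t)]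
    exact ENNReal.ofReal_le_ofReal h1
  -- some level `L > 0` has `{g ≤ L}` of positive measure, as these sets exhaust `(0,1)`
  obtain ⟨L, hL, hLpos⟩ : ∃ L : ℝ, 0 < L ∧ volume (Ioo (0:ℝ) 1 ∩ {x | g x ≤ L}) ≠ 0 := by
    by_contra! hcon
    have h1 : Ioo (0:ℝ) 1 ⊆ ⋃ n : ℕ, Ioo (0:ℝ) 1 ∩ {x | g x ≤ (n:ℝ) + 1} := by
      intro x hx
      obtain ⟨n, hn⟩ := exists_nat_ge (g x)
      exact mem_iUnion.2 ⟨n, hx, by simp only [mem_ofPred_eq]; linarith⟩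
    have h2 := measure_mono_null h1 (measure_iUnion_null fun n => hcon _ (by positivity))
    simp at h2
  have hres := integrable_rpow_of_level (volume.restrict (Ioo (0:ℝ) 1)) g hgm hg0 hgi c L hc hL
    (fun t ht => by
      have ht0 : 0 ≤ t := hL.le.trans ht
      have hset : {x | t < g x} ∩ Ioo (0:ℝ) 1 = Ioo (0:ℝ) 1 \ {x | g x ≤ t} := by
        ext x; simp [and_comm]
      have hm : MeasurableSet {x | t < g x} := measurableSet_lt measurable_const hgm
      have h1 := measure_diff_le ν (ENNReal.ofReal (c * t)) ENNReal.ofReal_ne_top {x | g x ≤ t}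
        (measurableSet_le hgm measurable_const) (hint t ht0)
        ((pos_iff_ne_zero.2 hLpos).trans_le (measure_mono
          (inter_subset_inter_right _ fun x hx => le_trans hx ht))).ne'
      rw [← hset, hν, withDensity_apply _ (hm.inter measurableSet_Ioo)] at h1
      rwa [Measure.restrict_restrict hm, Measure.restrict_apply hm])
    p hp1 hp
  refine Integrable.congr hres ?_
  filter_upwards [hge] with x hx
  rw [hx]
end
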